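/- Let f : ℂ → ℂ be a polynomial function and let H denote the Hilbert transform, defined by Hg = 𝓕⁻¹[x ↦ -i sgn(x) · 𝓕g(x)]. Then for every z ∈ ℂ, B(H(B⁻¹f))(z) = (2/√π) ∫_ℂ f(w) e^{z w̄} A((z - w̄)/√2) dλ(w). -/

import Mathlib

open MeasureTheory Complex

/-- Integration against the Gaussian measure dλ(z) = π⁻¹ e^{-|z|²} dA(z) on ℂ. -/
noncomputable def gaussInt (F : ℂ → ℂ) : ℂ :=
  (Real.pi : ℂ)⁻¹ * ∫ w : ℂ, F w * Complex.exp (-(‖w‖ : ℂ)^2)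

/-- The Bargmann transform Bf(z) = (2/π)^{1/4} ∫ f(x) e^{2xz - x² - z²/2} dx. -/
noncomputable def Bargmann (f : ℝ → ℂ) (z : ℂ) : ℂ :=
  (((2 / Real.pi) ^ ((1:ℝ)/4) : ℝ) : ℂ) *
    ∫ x : ℝ, f x * Complex.exp (2*x*z - (x:ℂ)^2 - z^2/2)

/-- The inverse Bargmann transform B⁻¹F(x) = (2/π)^{1/4} ∫_ℂ F(z) e^{2xz̄ - x² - z̄²/2} dλ(z). -/
noncomputable def BargmannInv (F : ℂ → ℂ) (x : ℝ) : ℂ :=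
  (((2 / Real.pi) ^ ((1:ℝ)/4) : ℝ) : ℂ) *
    gaussInt (fun z => F z * Complex.exp (2*x*(starRingEnd ℂ z) - (x:ℂ)^2 - (starRingEnd ℂ z)^2/2))

/-- The Fourier transform 𝓕f(x) = π^{-1/2} ∫ e^{-2ixt} f(t) dt. -/
noncomputable def FourierT (f : ℝ → ℂ) (x : ℝ) : ℂ :=
  (((Real.sqrt Real.pi)⁻¹ : ℝ) : ℂ) * ∫ t : ℝ, Complex.exp (-2 * Complex.I * x * t) * f t

/-- The inverse Fourier transform 𝓕⁻¹f(x) = π^{-1/2} ∫ e^{2ixt} f(t) dt. -/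
noncomputable def FourierInv (f : ℝ → ℂ) (x : ℝ) : ℂ :=
  (((Real.sqrt Real.pi)⁻¹ : ℝ) : ℂ) * ∫ t : ℝ, Complex.exp (2 * Complex.I * x * t) * f t

/-- The Hilbert transform Hg = 𝓕⁻¹[x ↦ -i sgn(x) 𝓕g(x)]. -/
noncomputable def hilbertT (g : ℝ → ℂ) : ℝ → ℂ :=
  FourierInv (fun x => -Complex.I * ((Real.sign x : ℝ) : ℂ) * FourierT g x)

/-- A(z) = ∫₀^z e^{u²} du, the antiderivative of e^{z²} vanishing at 0, the integral being
taken along the segment from 0 to z (equivalently, any path from 0 to z). -/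
noncomputable def Afun (z : ℂ) : ℂ :=
  ∫ t in (0:ℝ)..1, z * Complex.exp (((t:ℂ) * z)^2)

lemma gauss1 (a d : ℂ) :
    ∫ x : ℝ, cexp (2*x*a - (x:ℂ)^2 + d) = (Real.sqrt Real.pi : ℂ) * cexp (a^2 + d) := by
  have h := integral_cexp_quadratic (b := -1) (by simp) (2*a) d
  have e : (fun x : ℝ => cexp (2*x*a - (x:ℂ)^2 + d)) =
      fun x : ℝ => cexp (-1 * (x:ℂ)^2 + 2*a*x + d) := by
    funext x; congr 1; ring
  rw [e, h]
  congr 1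
  · rw [Real.sqrt_eq_rpow, Complex.ofReal_cpow Real.pi_pos.le]; simp
  · congr 1; ring

lemma gauss1_int (a d : ℂ) :
    Integrable (fun x : ℝ => cexp (2*x*a - (x:ℂ)^2 + d)) := by
  have h := integrable_cexp_quadratic' (b := -1) (by simp) (2*a) d
  have e : (fun x : ℝ => cexp (2*x*a - (x:ℂ)^2 + d)) =
      fun x : ℝ => cexp (-1 * (x:ℂ)^2 + 2*a*x + d) := by
    funext x; congr 1; ring
  rw [e]; exact h

lemma poly_bound (p : Polynomial ℂ) : ∃ C : ℝ, ∀ w, ‖p.eval w‖ ≤ C * Real.exp (‖w‖^2/4) := by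
  induction p using Polynomial.induction_on' with
  | add p q hp hq =>
    obtain ⟨C, hC⟩ := hp
    obtain ⟨D, hD⟩ := hq
    refine ⟨C + D, fun w => ?_⟩
    rw [Polynomial.eval_add, add_mul]
    exact (norm_add_le _ _).trans (add_le_add (hC w) (hD w))
  | monomial n a =>
    refine ⟨‖a‖ * (n.factorial * Real.exp 1), fun w => ?_⟩
    rw [Polynomial.eval_monomial, norm_mul, norm_pow, mul_assoc, mul_assoc, ← Real.exp_add]
    gcongr
    have h := Real.pow_div_factorial_le_exp ‖w‖ (norm_nonneg w) n
    rw [div_le_iff₀ (by positivity), mul_comm] at h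
    refine h.trans ?_
    gcongr
    nlinarith [sq_nonneg (‖w‖/2 - 1)]

lemma poly_int (p : Polynomial ℂ) :
    Integrable (fun w : ℂ => ‖p.eval w‖ * Real.exp (-‖w‖^2/2)) := by
  obtain ⟨C, hC⟩ := poly_bound p
  have h := (GaussianFourier.integrable_cexp_neg_mul_sq_norm_add (V := ℂ)
    (b := 1/4) (by norm_num) 0 0).norm.const_mul C
  refine h.mono' (by fun_prop) (Filter.Eventually.of_forall fun w => ?_)
  rw [Real.norm_of_nonneg (by positivity)]
  have e1 : ‖cexp (-(1/4) * (‖w‖:ℂ)^2 + 0 * ((inner ℝ (0:ℂ) w : ℝ) : ℂ))‖ = Real.exp (-‖w‖^2/4) := by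
    rw [Complex.norm_exp, zero_mul, add_zero]
    have : (-(1/4) * (‖w‖:ℂ)^2) = ((-‖w‖^2/4 : ℝ) : ℂ) := by push_cast; ring
    rw [this, Complex.ofReal_re]
  rw [e1]
  calc _ ≤ (C * Real.exp (‖w‖^2/4)) * Real.exp (-‖w‖^2/2) := by gcongr; exact hC w
    _ = _ := by rw [mul_assoc, ← Real.exp_add]; congr 2; ring

/-- general joint integrability -/
lemma joint_int (p : Polynomial ℂ) (E : ℝ × ℂ → ℂ) (hE : Continuous E) (g : ℂ → ℝ)
    (hg : Continuous g)
    (hb : ∀ x w, ‖E (x, w)‖ ≤ Real.exp (-(x - g w)^2) * Real.exp (-‖w‖^2/2)) :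
    Integrable (fun q : ℝ × ℂ => p.eval q.2 * E q) (volume.prod volume) := by
  have hG : Integrable (fun x : ℝ => Real.exp (-x^2)) := by
    simpa using integrable_exp_neg_mul_sq (b := 1) one_pos
  have hM : Integrable (fun q : ℝ × ℂ =>
      Real.exp (-(q.1 - g q.2)^2) * (‖p.eval q.2‖ * Real.exp (-‖q.2‖^2/2)))
      ((volume : Measure ℝ).prod (volume : Measure ℂ)) := by
    rw [integrable_prod_iff' (by
      apply Continuous.aestronglyMeasurable
      fun_prop)]
    constructor
    · refine Filter.Eventually.of_forall fun w => ?_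
      exact (hG.comp_sub_right (g w)).mul_const (‖p.eval w‖ * Real.exp (-‖w‖^2/2))
    · have : (fun w : ℂ => ∫ x : ℝ, ‖Real.exp (-(x - g w)^2) * (‖p.eval w‖ * Real.exp (-‖w‖^2/2))‖)
          = fun w => (∫ x : ℝ, Real.exp (-x^2)) * (‖p.eval w‖ * Real.exp (-‖w‖^2/2)) := by
        funext w
        rw [← integral_sub_right_eq_self (fun x : ℝ => Real.exp (-x^2)) (g w), ← integral_mul_const]
        congr 1; funext x
        rw [Real.norm_of_nonneg (by positivity)]
      rw [this]
      exact (poly_int p).const_mul _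
  refine hM.mono' (by apply Continuous.aestronglyMeasurable; fun_prop)
    (Filter.Eventually.of_forall fun q => ?_)
  rw [norm_mul]
  calc _ ≤ ‖p.eval q.2‖ * (Real.exp (-(q.1 - g q.2)^2) * Real.exp (-‖q.2‖^2/2)) := by
        gcongr; exact hb q.1 q.2
    _ = _ := by ring

lemma kern_seg (b : ℂ) :
    cexp (b^2/2) * (∫ t in Set.Ioi (0:ℝ), cexp (2*I*b*t - 2*(t:ℂ)^2))
      - (∫ t in Set.Ioi (0:ℝ), cexp (- 2*(t:ℂ)^2))
      = I/2 * (Real.sqrt 2 : ℂ) * Afun (b / (Real.sqrt 2 : ℂ)) := by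
  have hint : ∀ c : ℂ, Integrable (fun t : ℝ => cexp (c*t - 2*(t:ℂ)^2)) := fun c => by
    have h := integrable_cexp_quadratic' (b := -2) (by simp) c 0
    refine h.congr (Filter.Eventually.of_forall fun t => ?_)
    simp only; congr 1; ring
  have hint2 : ∀ c : ℂ, IntegrableOn (fun t : ℝ => (t:ℂ) * cexp (c*t - 2*(t:ℂ)^2)) (Set.Ioi 0) := by
    intro c
    refine Integrable.mono (hint (c+1)).integrableOn (by apply Continuous.aestronglyMeasurable; fun_prop) ?_
    refine (ae_restrict_iff' measurableSet_Ioi).2 (Filter.Eventually.of_forall fun t ht => ?_)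
    have ht : 0 < t := ht
    have : cexp ((c+1)*t - 2*(t:ℂ)^2) = cexp t * cexp (c*t - 2*(t:ℂ)^2) := by
      rw [← Complex.exp_add]; congr 1; ring
    rw [this, norm_mul, norm_mul, Complex.norm_exp (t:ℂ), Complex.ofReal_re, Complex.norm_real,
      Real.norm_of_nonneg ht.le]
    gcongr
    linarith [Real.add_one_le_exp t]
  set K : ℝ → ℂ := fun s => ∫ t in Set.Ioi (0:ℝ), cexp (2*I*(s*b)*t - 2*(t:ℂ)^2) with hK
  have hbp : ∀ s : ℝ, 2*I*(s*b) * K s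
      - 4 * (∫ t in Set.Ioi (0:ℝ), (t:ℂ) * cexp (2*I*(s*b)*t - 2*(t:ℂ)^2)) = -1 := by
    intro s
    have hd : ∀ t ∈ Set.Ici (0:ℝ), HasDerivAt (fun t : ℝ => cexp (2*I*(s*b)*t - 2*(t:ℂ)^2))
        (2*I*(s*b) * cexp (2*I*(s*b)*t - 2*(t:ℂ)^2)
          - 4 * ((t:ℂ) * cexp (2*I*(s*b)*t - 2*(t:ℂ)^2))) t := by
      intro t _
      have h1 : HasDerivAt (fun t : ℂ => cexp (2*I*(s*b)*t - 2*t^2))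
        (cexp (2*I*(s*b)*t - 2*(t:ℂ)^2) * (2*I*(s*b)*1 - 2*((2:ℕ)*(t:ℂ)^1*1))) (t:ℂ) :=
        ((((hasDerivAt_id (t:ℂ)).const_mul _).sub
          (((hasDerivAt_id (t:ℂ)).pow 2).const_mul 2))).cexp
      have h2 := h1.comp_ofReal
      convert h2 using 1
      push_cast; ring
    have hi := ((hint (2*I*(s*b))).integrableOn (s := Set.Ioi 0)).const_mul (2*I*(s*b))
    have hi2 := (hint2 (2*I*(s*b))).const_mul 4
    have ht := tendsto_zero_of_hasDerivAt_of_integrableOn_Ioi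
      (fun t ht => hd t (Set.Ioi_subset_Ici_self ht)) (hi.sub hi2)
      (hint (2*I*(s*b))).integrableOn
    have h := integral_Ioi_of_hasDerivAt_of_tendsto' hd (hi.sub hi2) ht
    rw [integral_sub hi hi2, integral_const_mul, integral_const_mul] at h
    rw [hK]; simp only
    rw [h]; simp
  have hKd : ∀ s : ℝ, HasDerivAt K
      (∫ t in Set.Ioi (0:ℝ), 2*I*b*((t:ℂ) * cexp (2*I*(s*b)*t - 2*(t:ℂ)^2))) s := by
    intro s
    set c : ℂ := ((2 * ‖b‖ * (|s|+1) : ℝ) : ℂ) with hc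
    refine (hasDerivAt_integral_of_dominated_loc_of_deriv_le (s := Metric.ball s 1)
      (bound := fun t : ℝ => ‖2*I*b*((t:ℂ) * cexp (c*t - 2*(t:ℂ)^2))‖)
      (F := fun (s:ℝ) (t:ℝ) => cexp (2*I*(s*b)*t - 2*(t:ℂ)^2))
      (F' := fun (s:ℝ) (t:ℝ) => 2*I*b*((t:ℂ) * cexp (2*I*(s*b)*t - 2*(t:ℂ)^2)))
      (Metric.ball_mem_nhds s one_pos) ?_ ?_ ?_ ?_ ?_ ?_).2
    · exact Filter.Eventually.of_forall fun s =>
        Continuous.aestronglyMeasurable (by fun_prop)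
    · exact (hint _).integrableOn
    · exact Continuous.aestronglyMeasurable (by fun_prop)
    · refine (ae_restrict_iff' measurableSet_Ioi).2 (Filter.Eventually.of_forall fun t ht => ?_)
      intro r hr
      have ht : 0 < t := ht
      rw [norm_mul, norm_mul (2*I*b), norm_mul (t:ℂ), norm_mul (t:ℂ), Complex.norm_exp,
        Complex.norm_exp]
      have ht2 : ((t:ℂ)^2).re = t^2 := by rw [← Complex.ofReal_pow, Complex.ofReal_re]
      have h1 : (2*I*(r*b)*t - 2*(t:ℂ)^2).re = (-2*r*b.im)*t - 2*t^2 := by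
        simp
        rw [ht2]; ring
      have h2 : (c*t - 2*(t:ℂ)^2).re = (2 * ‖b‖ * (|s|+1))*t - 2*t^2 := by
        rw [hc]
        simp
        rw [ht2]
      rw [h1, h2]
      refine mul_le_mul_of_nonneg_left (mul_le_mul_of_nonneg_left (Real.exp_le_exp.2
        (sub_le_sub_right (mul_le_mul_of_nonneg_right ?_ ht.le) _)) (norm_nonneg _)) (norm_nonneg _)
      rw [Metric.mem_ball, Real.dist_eq] at hr
      have h3 : |r| ≤ |s| + 1 := by
        have := abs_sub_abs_le_abs_sub r s
        linarith
      calc -2*r*b.im ≤ |-2*r*b.im| := le_abs_self _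
        _ = 2 * |b.im| * |r| := by rw [abs_mul, abs_mul, abs_neg, abs_two]; ring
        _ ≤ _ := by gcongr; exact Complex.abs_im_le_norm b
    · exact ((hint2 c).const_mul _).norm
    · refine Filter.Eventually.of_forall fun t => ?_
      intro r _
      have h1 : HasDerivAt (fun r : ℂ => cexp (2*I*(r*b)*t - 2*(t:ℂ)^2))
        (cexp (2*I*(r*b)*t - 2*(t:ℂ)^2) * (2*I*(1*b)*t)) (r:ℂ) :=
        (((((hasDerivAt_id (r:ℂ)).mul_const b).const_mul (2*I)).mul_const (t:ℂ)).sub_const _).cexp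
      have h2 := h1.comp_ofReal
      refine h2.congr_deriv ?_
      ring
  have hT : ∀ s : ℝ, HasDerivAt (fun s : ℝ => cexp ((s*b)^2/2) * K s)
      (I/2 * b * cexp ((s*b)^2/2)) s := by
    intro s
    have h1 : HasDerivAt (fun r : ℂ => cexp ((r*b)^2/2))
      (cexp ((s*b)^2/2) * (((2:ℕ)*((s:ℂ)*b)^1*(1*b))/2)) (s:ℂ) :=
      ((((hasDerivAt_id (s:ℂ)).mul_const b).pow 2).div_const 2).cexp
    have h2 := h1.comp_ofReal.mul (hKd s)
    refine h2.congr_deriv ?_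
    rw [integral_const_mul]
    have h3 := hbp s
    push_cast
    linear_combination -(cexp ((s*b)^2/2) * I * b / 2) * h3 + (cexp ((s*b)^2/2) * s * b * b * K s) * I_sq
  have hF := intervalIntegral.integral_eq_sub_of_hasDerivAt (a := 0) (b := 1)
    (fun s _ => hT s) (Continuous.intervalIntegrable (by fun_prop) _ _)
  have hA : (∫ s in (0:ℝ)..1, I/2 * b * cexp ((s*b)^2/2))
      = I/2 * (Real.sqrt 2 : ℂ) * Afun (b / (Real.sqrt 2 : ℂ)) := by
    have h2 : (Real.sqrt 2 : ℂ) ≠ 0 := by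
      simp
    have h3 : (Real.sqrt 2 : ℂ)^2 = 2 := by
      rw [← Complex.ofReal_pow, Real.sq_sqrt (by norm_num)]; simp
    rw [Afun, ← intervalIntegral.integral_const_mul]
    congr 1; funext s
    have : ((s:ℂ) * (b / (Real.sqrt 2 : ℂ)))^2 = (s*b)^2/2 := by
      rw [mul_pow, div_pow, h3]; ring
    rw [this]
    field_simp
  rw [← hA, hF, hK]
  simp

lemma Afun_neg (z : ℂ) : Afun (-z) = - Afun z := by
  rw [Afun, Afun, ← intervalIntegral.integral_neg]
  congr 1; funext t
  rw [mul_neg, neg_sq, neg_mul]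

lemma kern (b : ℂ) :
    ∫ t : ℝ, (-I * ((Real.sign t : ℝ) : ℂ)) * cexp (2*I*b*t - 2*(t:ℂ)^2)
      = (Real.sqrt 2 : ℂ) * cexp (-b^2/2) * Afun (b / (Real.sqrt 2 : ℂ)) := by
  have hint : ∀ c : ℂ, Integrable (fun t : ℝ => cexp (c*t - 2*(t:ℂ)^2)) := fun c => by
    have h := integrable_cexp_quadratic' (b := -2) (by simp) c 0
    refine h.congr (Filter.Eventually.of_forall fun t => ?_)
    simp only; congr 1; ring
  have hpos : ∀ t ∈ Set.Ioi (0:ℝ), (-I * ((Real.sign t : ℝ) : ℂ)) * cexp (2*I*b*t - 2*(t:ℂ)^2)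
      = -I * cexp (2*I*b*t - 2*(t:ℂ)^2) := by
    intro t ht
    rw [Real.sign_of_pos ht]; simp
  have hneg : ∀ t ∈ Set.Iio (0:ℝ), (-I * ((Real.sign t : ℝ) : ℂ)) * cexp (2*I*b*t - 2*(t:ℂ)^2)
      = I * cexp (2*I*b*t - 2*(t:ℂ)^2) := by
    intro t ht
    rw [Real.sign_of_neg ht]; simp
  have i1 := ((hint (2*I*b)).const_mul (-I)).integrableOn (s := Set.Ioi 0)
  have i2 := ((hint (2*I*b)).const_mul I).integrableOn (s := Set.Iio 0)
  have i1' := i1.congr_fun (fun t ht => (hpos t ht).symm) measurableSet_Ioi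
  have i2' := i2.congr_fun (fun t ht => (hneg t ht).symm) measurableSet_Iio
  rw [← integrableOn_Iic_iff_integrableOn_Iio] at i2'
  rw [← intervalIntegral.integral_Iic_add_Ioi i2' i1', integral_Iic_eq_integral_Iio,
    setIntegral_congr_fun measurableSet_Ioi hpos, setIntegral_congr_fun measurableSet_Iio hneg,
    integral_const_mul, integral_const_mul, ← integral_Iic_eq_integral_Iio]
  have hn : ∫ t in Set.Iic (0:ℝ), cexp (2*I*b*t - 2*(t:ℂ)^2)
      = ∫ t in Set.Ioi (0:ℝ), cexp (2*I*(-b)*t - 2*(t:ℂ)^2) := by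
    have := integral_comp_neg_Ioi (0:ℝ) (fun t : ℝ => cexp (2*I*b*t - 2*(t:ℂ)^2))
    rw [neg_zero] at this
    rw [← this]
    congr 1; funext t; congr 1; push_cast; ring
  rw [hn]
  have k1 := kern_seg b
  have k2 := kern_seg (-b)
  rw [neg_sq, neg_div, Afun_neg] at k2
  have he : cexp (-b^2/2) * cexp (b^2/2) = 1 := by
    rw [← Complex.exp_add, ← Complex.exp_zero]; congr 1; ring
  set P := ∫ t in Set.Ioi (0:ℝ), cexp (2*I*b*t - 2*(t:ℂ)^2)
  set Q := ∫ t in Set.Ioi (0:ℝ), cexp (2*I*(-b)*t - 2*(t:ℂ)^2)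
  set A := Afun (b / (Real.sqrt 2 : ℂ))
  linear_combination (-I * cexp (-b^2/2)) * (k1 - k2) - I * (Q - P) * he
    - (cexp (-b^2/2) * (Real.sqrt 2 : ℂ) * A) * I_sq

lemma sq_norm_re (w : ℂ) : ((‖w‖:ℂ)^2).re = w.re^2 + w.im^2 := by
  rw [← Complex.ofReal_pow, Complex.ofReal_re, Complex.sq_norm, Complex.normSq_apply]; ring

lemma ofReal_sq_re (t : ℝ) : ((t:ℂ)^2).re = t^2 := by
  rw [← Complex.ofReal_pow, Complex.ofReal_re]

lemma joint1 (p : Polynomial ℂ) (t : ℝ) : Integrable (fun q : ℝ × ℂ => p.eval q.2 *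
    cexp (2*q.1*(starRingEnd ℂ q.2 - I*t) - (q.1:ℂ)^2
      + (-(starRingEnd ℂ q.2)^2/2 - (‖q.2‖:ℂ)^2))) (volume.prod volume) := by
  refine joint_int p _ (by fun_prop) (fun w => w.re) (by fun_prop) fun x w => ?_
  rw [Complex.norm_exp, ← Real.exp_add]
  apply le_of_eq
  congr 1
  simp only [Complex.add_re, Complex.sub_re, sq_norm_re, ofReal_sq_re]
  rw [Complex.sq_norm, Complex.normSq_apply]
  simp [pow_two]
  ring

lemma joint2 (p : Polynomial ℂ) : Integrable (fun q : ℝ × ℂ => p.eval q.2 *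
    cexp ((starRingEnd ℂ q.2)^2/2 - 2*I*(starRingEnd ℂ q.2)*q.1 - (q.1:ℂ)^2
      - (‖q.2‖:ℂ)^2)) (volume.prod volume) := by
  refine joint_int p _ (by fun_prop) (fun w => -w.im) (by fun_prop) fun x w => ?_
  rw [Complex.norm_exp, ← Real.exp_add]
  apply le_of_eq
  congr 1
  simp only [Complex.add_re, Complex.sub_re, sq_norm_re, ofReal_sq_re]
  rw [Complex.sq_norm, Complex.normSq_apply]
  simp [pow_two]
  ring

lemma sqrtpi_ne : (Real.sqrt Real.pi : ℂ) ≠ 0 := by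
  simp [Real.sqrt_ne_zero', Real.pi_pos]

lemma fourier_inv_bargmann (p : Polynomial ℂ) (t : ℝ) :
    FourierT (BargmannInv (fun w => p.eval w)) t =
      (((2 / Real.pi) ^ ((1:ℝ)/4) : ℝ) : ℂ) * (Real.pi : ℂ)⁻¹ * ∫ w : ℂ, p.eval w *
        cexp ((starRingEnd ℂ w)^2/2 - 2*I*(starRingEnd ℂ w)*t - (t:ℂ)^2 - (‖w‖:ℂ)^2) := by
  unfold FourierT BargmannInv gaussInt
  set c := (((2 / Real.pi) ^ ((1:ℝ)/4) : ℝ) : ℂ)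
  have e1 : ∀ x : ℝ, cexp (-2 * I * t * x) * (c * ((Real.pi:ℂ)⁻¹ * ∫ w : ℂ, p.eval w *
      cexp (2*x*(starRingEnd ℂ w) - (x:ℂ)^2 - (starRingEnd ℂ w)^2/2) * cexp (-(‖w‖ : ℂ)^2)))
      = c * (Real.pi:ℂ)⁻¹ * ∫ w : ℂ, p.eval w * cexp (2*x*(starRingEnd ℂ w - I*t) - (x:ℂ)^2
      + (-(starRingEnd ℂ w)^2/2 - (‖w‖:ℂ)^2)) := by
    intro x
    rw [mul_left_comm, mul_left_comm (cexp _), ← integral_const_mul, ← mul_assoc c]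
    congr 2; funext w
    rw [mul_left_comm, mul_assoc, mul_left_comm, ← Complex.exp_add, mul_left_comm, ← Complex.exp_add]
    congr 2; ring
  simp_rw [e1]
  rw [integral_const_mul, integral_integral_swap (joint1 p t)]
  simp_rw [integral_const_mul, gauss1]
  rw [mul_left_comm, ← integral_const_mul]
  congr 2; funext w
  rw [mul_left_comm, ← mul_assoc ((_ : ℝ) : ℂ), Complex.ofReal_inv, inv_mul_cancel₀ sqrtpi_ne, one_mul]
  congr 2
  linear_combination (t:ℂ)^2 * I_sq

lemma sign_meas : Measurable (fun t : ℝ => ((Real.sign t : ℝ) : ℂ)) := by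
  apply Complex.measurable_ofReal.comp
  unfold Real.sign
  exact Measurable.ite measurableSet_Iio measurable_const
    (Measurable.ite measurableSet_Ioi measurable_const measurable_const)

lemma sign_norm (t : ℝ) : ‖-I * ((Real.sign t : ℝ) : ℂ)‖ ≤ 1 := by
  rcases Real.sign_apply_eq t with h | h | h <;> rw [h] <;> simp

lemma bargmann_hilbert_step (g : ℝ → ℂ) (hg : Integrable (FourierT g)) (z : ℂ) :
    Bargmann (hilbertT g) z = (((2 / Real.pi) ^ ((1:ℝ)/4) : ℝ) : ℂ) *
      ∫ t : ℝ, (-I * ((Real.sign t : ℝ) : ℂ) * cexp (z^2/2 + 2*I*z*t - (t:ℂ)^2)) * FourierT g t := by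
  unfold Bargmann hilbertT FourierInv
  set H : ℝ → ℂ := fun t => -I * ((Real.sign t : ℝ) : ℂ) * FourierT g t with hH
  have hHi : Integrable H := hg.bdd_mul (c := 1)
    (sign_meas.const_mul _).aestronglyMeasurable (Filter.Eventually.of_forall sign_norm)
  have e1 : ∀ x : ℝ, ((((Real.sqrt Real.pi)⁻¹ : ℝ) : ℂ) * ∫ t : ℝ, cexp (2 * I * x * t) * H t)
      * cexp (2*x*z - (x:ℂ)^2 - z^2/2) = (((Real.sqrt Real.pi)⁻¹ : ℝ) : ℂ) *
      ∫ t : ℝ, H t * cexp (2*x*(z + I * t) - (x:ℂ)^2 + -z^2/2) := by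
    intro x
    rw [mul_assoc, ← integral_mul_const]
    congr 2; funext t
    have : cexp (2*x*(z + I * t) - (x:ℂ)^2 + -z^2/2)
      = cexp (2 * I * x * t) * cexp (2*x*z - (x:ℂ)^2 - z^2/2) := by
      rw [← Complex.exp_add]; congr 1; ring
    rw [this]; ring
  have hprod : Integrable (Function.uncurry fun (x t : ℝ) =>
      H t * cexp (2*x*(z + I * t) - (x:ℂ)^2 + -z^2/2)) (volume.prod volume) := by
    have h1 := (gauss1_int z (-z^2/2)).mul_prod hHi
    have h2 := h1.bdd_mul (f := fun q : ℝ × ℝ => cexp (2 * I * q.1 * q.2)) (c := 1)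
      (Continuous.aestronglyMeasurable (by fun_prop)) (Filter.Eventually.of_forall fun q => by
        have : (2 * I * q.1 * q.2 : ℂ) = ((2 * q.1 * q.2 : ℝ) : ℂ) * I := by push_cast; ring
        rw [this, Complex.norm_exp_ofReal_mul_I])
    refine h2.congr (Filter.Eventually.of_forall fun q => ?_)
    simp only [Function.uncurry]
    have : cexp (2*q.1*(z + I * q.2) - (q.1:ℂ)^2 + -z^2/2)
      = cexp (2 * I * q.1 * q.2) * cexp (2*q.1*z - (q.1:ℂ)^2 + -z^2/2) := by
      rw [← Complex.exp_add]; congr 1; ring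
    rw [this]; ring
  simp_rw [e1]
  rw [integral_const_mul, integral_integral_swap hprod, ← integral_const_mul]
  congr 2; funext t
  rw [integral_const_mul, gauss1, mul_left_comm, ← mul_assoc ((_ : ℝ) : ℂ), Complex.ofReal_inv,
    inv_mul_cancel₀ sqrtpi_ne, one_mul, hH]
  have : (z + I*t)^2 + -z^2/2 = z^2/2 + 2*I*z*t - (t:ℂ)^2 := by
    linear_combination (t:ℂ)^2 * I_sq
  simp only [this]
  ring

/-- Under the Bargmann transform, the Hilbert transform becomes the integral operator
f ↦ (2/√π) ∫ f(w) e^{zw̄} A((z - w̄)/√2) dλ(w). -/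
theorem bargmann_hilbert (p : Polynomial ℂ) (f : ℂ → ℂ) (hf : ∀ z, f z = p.eval z) (z : ℂ) :
    Bargmann (hilbertT (BargmannInv f)) z =
      2 / (Real.sqrt Real.pi : ℂ) * gaussInt (fun w =>
        f w * Complex.exp (z * starRingEnd ℂ w) *
          Afun ((z - starRingEnd ℂ w) / (Real.sqrt 2 : ℂ))) := by
  obtain rfl : f = fun w => p.eval w := funext hf
  have hFT := fun t => fourier_inv_bargmann p t
  have hJ := joint2 p
  have hFi : Integrable (FourierT (BargmannInv fun w => p.eval w)) := by
    rw [funext hFT]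
    exact hJ.integral_prod_left.const_mul _
  rw [bargmann_hilbert_step _ hFi]
  simp_rw [hFT]
  unfold gaussInt
  have hcc : (((2 / Real.pi) ^ ((1:ℝ)/4) : ℝ) : ℂ) * (((2 / Real.pi) ^ ((1:ℝ)/4) : ℝ) : ℂ)
      = (Real.sqrt 2 : ℂ) / (Real.sqrt Real.pi : ℂ) := by
    rw [← Complex.ofReal_mul, ← Real.rpow_add (by positivity), ← Complex.ofReal_div,
      ← Real.sqrt_div (by norm_num), Real.sqrt_eq_rpow]
    norm_num
  have h22 : (Real.sqrt 2 : ℂ) * (Real.sqrt 2 : ℂ) = 2 := by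
    rw [← Complex.ofReal_mul, Real.mul_self_sqrt (by norm_num)]; simp
  set c := (((2 / Real.pi) ^ ((1:ℝ)/4) : ℝ) : ℂ)
  have e1 : ∀ t : ℝ, (-I * ((Real.sign t : ℝ) : ℂ) * cexp (z^2/2 + 2*I*z*t - (t:ℂ)^2)) *
      (c * (Real.pi : ℂ)⁻¹ * ∫ w : ℂ, p.eval w *
        cexp ((starRingEnd ℂ w)^2/2 - 2*I*(starRingEnd ℂ w)*t - (t:ℂ)^2 - (‖w‖:ℂ)^2))
      = c * (Real.pi : ℂ)⁻¹ * ∫ w : ℂ,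
        (-I * ((Real.sign t : ℝ) : ℂ) * cexp (z^2/2 + 2*I*z*t - (t:ℂ)^2)) * (p.eval w *
        cexp ((starRingEnd ℂ w)^2/2 - 2*I*(starRingEnd ℂ w)*t - (t:ℂ)^2 - (‖w‖:ℂ)^2)) := by
    intro t
    rw [mul_left_comm, ← integral_const_mul]
  simp_rw [e1]
  have hprod : Integrable (Function.uncurry fun (t : ℝ) (w : ℂ) =>
      (-I * ((Real.sign t : ℝ) : ℂ) * cexp (z^2/2 + 2*I*z*t - (t:ℂ)^2)) * (p.eval w *
        cexp ((starRingEnd ℂ w)^2/2 - 2*I*(starRingEnd ℂ w)*t - (t:ℂ)^2 - (‖w‖:ℂ)^2)))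
      (volume.prod volume) := by
    refine hJ.bdd_mul (f := fun q : ℝ × ℂ =>
      -I * ((Real.sign q.1 : ℝ) : ℂ) * cexp (z^2/2 + 2*I*z*q.1 - (q.1:ℂ)^2))
      (c := Real.exp ((z^2/2).re + z.im^2)) ?_ (Filter.Eventually.of_forall fun q => ?_)
    · refine AEStronglyMeasurable.mul ?_ (Continuous.aestronglyMeasurable (by fun_prop))
      exact ((sign_meas.comp measurable_fst).const_mul (-I)).aestronglyMeasurable
    · rw [norm_mul, ← one_mul (Real.exp _)]
      refine mul_le_mul (sign_norm _) ?_ (norm_nonneg _) zero_le_one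
      rw [Complex.norm_exp, Real.exp_le_exp, Complex.sub_re, Complex.add_re, ofReal_sq_re]
      have : (2*I*z*q.1).re = -2*z.im*q.1 := by simp
      rw [this]
      nlinarith [sq_nonneg (z.im + q.1)]
  rw [integral_const_mul, integral_integral_swap hprod]
  have e2 : ∀ w : ℂ, ∫ t : ℝ,
      (-I * ((Real.sign t : ℝ) : ℂ) * cexp (z^2/2 + 2*I*z*t - (t:ℂ)^2)) * (p.eval w *
        cexp ((starRingEnd ℂ w)^2/2 - 2*I*(starRingEnd ℂ w)*t - (t:ℂ)^2 - (‖w‖:ℂ)^2))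
      = (Real.sqrt 2 : ℂ) * (p.eval w * cexp (z * starRingEnd ℂ w) *
          Afun ((z - starRingEnd ℂ w) / (Real.sqrt 2 : ℂ)) * cexp (-(‖w‖ : ℂ)^2)) := by
    intro w
    have e3 : ∀ t : ℝ, (-I * ((Real.sign t : ℝ) : ℂ) * cexp (z^2/2 + 2*I*z*t - (t:ℂ)^2)) *
        (p.eval w *
        cexp ((starRingEnd ℂ w)^2/2 - 2*I*(starRingEnd ℂ w)*t - (t:ℂ)^2 - (‖w‖:ℂ)^2))
        = (p.eval w * cexp (z^2/2 + (starRingEnd ℂ w)^2/2 + -(‖w‖:ℂ)^2)) *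
        ((-I * ((Real.sign t : ℝ) : ℂ)) * cexp (2*I*(z - starRingEnd ℂ w)*t - 2*(t:ℂ)^2)) := by
      intro t
      have : cexp (z^2/2 + 2*I*z*t - (t:ℂ)^2) *
          cexp ((starRingEnd ℂ w)^2/2 - 2*I*(starRingEnd ℂ w)*t - (t:ℂ)^2 - (‖w‖:ℂ)^2)
          = cexp (z^2/2 + (starRingEnd ℂ w)^2/2 + -(‖w‖:ℂ)^2) *
            cexp (2*I*(z - starRingEnd ℂ w)*t - 2*(t:ℂ)^2) := by
        rw [← Complex.exp_add, ← Complex.exp_add]; congr 1; ring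
      linear_combination (-I * ((Real.sign t : ℝ) : ℂ) * p.eval w) * this
    simp_rw [e3]
    rw [integral_const_mul, kern]
    have : cexp (z^2/2 + (starRingEnd ℂ w)^2/2 + -(‖w‖:ℂ)^2) *
        cexp (-(z - starRingEnd ℂ w)^2/2) = cexp (z * starRingEnd ℂ w) * cexp (-(‖w‖ : ℂ)^2) := by
      rw [← Complex.exp_add, ← Complex.exp_add]; congr 1; ring
    linear_combination (p.eval w * (Real.sqrt 2 : ℂ) *
      Afun ((z - starRingEnd ℂ w) / (Real.sqrt 2 : ℂ))) * this
  simp_rw [e2]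
  rw [integral_const_mul]
  generalize (∫ w : ℂ, p.eval w * cexp (z * starRingEnd ℂ w) *
          Afun ((z - starRingEnd ℂ w) / (Real.sqrt 2 : ℂ)) * cexp (-(‖w‖ : ℂ)^2)) = X
  rw [← h22]
  linear_combination ((Real.pi : ℂ)⁻¹ * (Real.sqrt 2 : ℂ) * X) * hcc
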